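/- There exist absolute constants C > 0 and c > 0 such that for every integer n ≥ 1 and all finite sets X, Y, Z, W ⊆ ℤ with |X| = |Y| = |Z| = n and W 3-AP-free, one has #{(x,y) ∈ X × Y : x + y ∈ Z and x − y ∈ W} ≤ C · (r₃(n)/n)^c · n². In other words, p₃(n) ≪ (r₃(n)/n)^{Ω(1)}. -/

import Mathlib

/-- `r3 n` is the maximum cardinality of a 3-AP-free subset of `{1, ..., n}`. -/
noncomputable def r3 (n : ℕ) : ℕ :=
  sSup {k : ℕ | ∃ A : Finset ℤ, A ⊆ Finset.Icc 1 (n : ℤ) ∧ ThreeAPFree (A : Set ℤ) ∧ A.card = k}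

open Finset Pointwise

lemma roth_le_r3 (n : ℕ) : rothNumberNat n ≤ r3 n := by
  obtain ⟨t, ht, hc, hf⟩ := rothNumberNat_spec n
  have hinj : Function.Injective (fun x : ℕ => (x : ℤ) + 1) := by
    intro a b h
    simpa using h
  unfold r3
  apply le_csSup
  · refine ⟨n, ?_⟩
    rintro k ⟨A, hA, -, rfl⟩
    simpa using card_le_card hA
  · refine ⟨t.image (fun x : ℕ => (x : ℤ) + 1), ?_, ?_, ?_⟩
    · intro z hz
      simp only [mem_image] at hz
      obtain ⟨x, hx, rfl⟩ := hz
      have := mem_range.1 (ht hx)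
      simp only [mem_Icc]
      omega
    · intro a ha b hb c hc h
      simp only [coe_image, Set.mem_image, mem_coe] at ha hb hc
      obtain ⟨x, hx, rfl⟩ := ha
      obtain ⟨y, hy, rfl⟩ := hb
      obtain ⟨z, hz, rfl⟩ := hc
      have := hf (mem_coe.2 hx) (mem_coe.2 hy) (mem_coe.2 hz) (by omega)
      simp [this]
    · rw [card_image_of_injective _ hinj, hc]

lemma roth_mul_le (k n : ℕ) : rothNumberNat (k * n) ≤ k * rothNumberNat n := by
  induction k with
  | zero => simp
  | succ k ih =>
    rw [Nat.succ_mul, Nat.succ_mul]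
    exact (rothNumberNat_add_le _ _).trans (by omega)

lemma model (A : Finset ℤ) (hA : ThreeAPFree (A : Set ℤ)) :
    #A ≤ rothNumberNat (8 * #((A + A) - (A + A))) := by
  obtain rfl | hne := A.eq_empty_or_nonempty
  · simp
  set D := (A + A) - (A + A) with hD
  set M := #D with hM
  have hMpos : 0 < M := by
    rw [hM, card_pos]
    exact (hne.add hne).sub (hne.add hne)
  obtain ⟨p, hp1, hp⟩ := Nat.exists_infinite_primes (2 * M + 1 + ∑ d ∈ D, d.natAbs)
  have : Fact p.Prime := ⟨hp⟩
  have hd : ∀ d ∈ D, d ≠ 0 → (d : ZMod p) ≠ 0 := by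
    intro d hdD hd0 h
    rw [ZMod.intCast_zmod_eq_zero_iff_dvd] at h
    have h1 : p ≤ d.natAbs := Nat.le_of_dvd (by omega) (Int.natCast_dvd.1 h)
    have h2 : d.natAbs ≤ ∑ d ∈ D, d.natAbs :=
      single_le_sum (f := fun d : ℤ => d.natAbs) (fun _ _ => Nat.zero_le _) hdD
    omega
  set L : ℕ := p / (4 * M) with hL
  let S : Finset ℤ := Icc (-(L : ℤ)) L
  have hS : #S = 2 * L + 1 := by simp [S]; omega
  let bad : Finset (ZMod p) := (D ×ˢ S).image (fun q => (q.2 : ZMod p) * (q.1 : ZMod p)⁻¹)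
  have hbad : #bad < p := by
    have h1 : #bad ≤ M * (2 * L + 1) := by
      refine card_image_le.trans ?_
      rw [card_product, hS]
    have h2 : L * (4 * M) ≤ p := Nat.div_mul_le_self _ _
    have h3 : 2 * M + 1 ≤ p := by omega
    nlinarith
  obtain ⟨j, hj⟩ : ∃ j, j ∉ bad := by
    by_contra! h
    have : bad = univ := by ext x; simp [h x]
    rw [this, card_univ, ZMod.card] at hbad
    omega
  have hppos : 0 < p := hp.pos
  let r : ℤ → ℕ := fun x => (j * (x : ZMod p)).val
  let φ : ℤ → ℕ := fun x => 8 * M * r x / p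
  have key : ∀ x ∈ A, ∀ y ∈ A, ∀ z ∈ A, φ x + φ z = φ y + φ y → x = y := by
    intro x hx y hy z hz h
    by_cases hxyz : x + z = y + y
    · exact hA (mem_coe.2 hx) (mem_coe.2 hy) (mem_coe.2 hz) hxyz
    exfalso
    have hdD : (x + z) - (y + y) ∈ D := sub_mem_sub (add_mem_add hx hz) (add_mem_add hy hy)
    have hd0 : (x + z) - (y + y) ≠ 0 := sub_ne_zero.2 hxyz
    apply hj
    simp only [bad, mem_image, mem_product]
    refine ⟨((x + z) - (y + y), (r x : ℤ) + r z - (r y + r y)), ⟨hdD, ?_⟩, ?_⟩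
    · have e : ∀ u, p * φ u ≤ 8 * M * r u ∧ 8 * M * r u < p * φ u + p := by
        intro u
        refine ⟨Nat.mul_div_le _ _, ?_⟩
        have := Nat.lt_mul_div_succ (8 * M * r u) hppos
        simpa [φ, Nat.mul_add] using this
      obtain ⟨a1, a2⟩ := e x
      obtain ⟨b1, b2⟩ := e y
      obtain ⟨c1, c2⟩ := e z
      have h' : p * φ x + p * φ z = p * φ y + p * φ y := by rw [← mul_add, h, mul_add]
      have q1 : 8 * M * r x + 8 * M * r z < 8 * M * r y + 8 * M * r y + 2 * p := by omega
      have q2 : 8 * M * r y + 8 * M * r y < 8 * M * r x + 8 * M * r z + 2 * p := by omega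
      simp only [S, mem_Icc]
      have hLL : p < 4 * M * (L + 1) := Nat.lt_mul_div_succ p (by omega)
      zify at q1 q2 hLL
      have hM' : (0 : ℤ) < M := by exact_mod_cast hMpos
      constructor
      · by_contra! hc
        have : (r x : ℤ) + r z - (r y + r y) + L + 1 ≤ 0 := by omega
        nlinarith
      · by_contra! hc
        have : 0 ≤ (r x : ℤ) + r z - (r y + r y) - L - 1 := by omega
        nlinarith
    · have := hd _ hdD hd0
      have e : (((r x : ℤ) + r z - (r y + r y) : ℤ) : ZMod p)
          = j * (((x + z) - (y + y) : ℤ) : ZMod p) := by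
        push_cast
        simp only [r, ZMod.natCast_val, ZMod.cast_id', id_eq]
        ring
      show (((r x : ℤ) + r z - (r y + r y) : ℤ) : ZMod p) * _ = j
      rw [e, mul_assoc, mul_inv_cancel₀ this, mul_one]
  have hinj : Set.InjOn φ A := by
    intro x hx y hy h
    exact key x hx y hy x hx (by simp [h])
  refine ThreeAPFree.le_rothNumberNat (A.image φ) ?_ ?_ (card_image_of_injOn hinj)
  · intro a ha b hb c hc h
    simp only [coe_image, Set.mem_image, mem_coe] at ha hb hc
    obtain ⟨x, hx, rfl⟩ := ha
    obtain ⟨y, hy, rfl⟩ := hb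
    obtain ⟨z, hz, rfl⟩ := hc
    rw [key x hx y hy z hz h]
  · intro a ha
    simp only [mem_image] at ha
    obtain ⟨x, hx, rfl⟩ := ha
    have : r x < p := ZMod.val_lt _
    rw [Nat.div_lt_iff_lt_mul hppos]
    exact (Nat.mul_lt_mul_left (by omega)).2 this

set_option maxHeartbeats 2000000 in
lemma bsg (n : ℕ) (hn : 1 ≤ n) (X Y Z : Finset ℤ) (hX : #X = n) (hY : #Y = n) (hZ : #Z = n)
    (G : Finset (ℤ × ℤ)) (hG : G ⊆ X ×ˢ Y) (hGZ : ∀ q ∈ G, q.1 + q.2 ∈ Z)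
    (δ : ℝ) (hδ : 0 < δ) (hGc : (#G : ℝ) = δ * n ^ 2) :
    ∃ y, ∃ A : Finset ℤ, (∀ a ∈ A, (a, y) ∈ G) ∧ δ * n / 4 ≤ #A ∧
      δ ^ 5 * #(A - A) ≤ 1024 * n := by
  classical
  have hn0 : (0 : ℝ) < n := by exact_mod_cast hn
  let N : ℤ → Finset ℤ := fun y => X.filter (fun x => (x, y) ∈ G)
  let Cod : ℤ → ℤ → Finset ℤ := fun a a' => Y.filter (fun y => (a, y) ∈ G ∧ (a', y) ∈ G)
  let bad : ℤ → ℤ → Prop := fun a a' => (#(Cod a a') : ℝ) < δ ^ 2 / 16 * n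
  have badsymm : ∀ a a', bad a a' ↔ bad a' a := by
    intro a a'
    simp only [bad, Cod, and_comm]
  let B : ℤ → Finset (ℤ × ℤ) := fun y => (N y ×ˢ N y).filter (fun q => bad q.1 q.2)
  have s1 : ∑ y ∈ Y, (#(N y) : ℝ) = δ * n ^ 2 := by
    rw [← hGc, ← Nat.cast_sum]
    congr 1
    rw [card_eq_sum_card_fiberwise (f := Prod.snd) (t := Y)
      (fun q hq => (mem_product.1 (hG hq)).2)]
    apply sum_congr rfl
    intro y hy
    refine card_bij (fun x _ => (x, y)) ?_ ?_ ?_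
    · intro a ha
      simp only [N, mem_filter] at ha
      simp [ha.2]
    · intro a _ b _ h
      simpa using h
    · rintro ⟨a, b⟩ h
      simp only [mem_filter] at h
      obtain ⟨h, rfl⟩ := h
      refine ⟨a, ?_, rfl⟩
      simp only [N, mem_filter]
      exact ⟨(mem_product.1 (hG h)).1, h⟩
  have s2 : δ ^ 2 * n ^ 3 ≤ ∑ y ∈ Y, (#(N y) : ℝ) ^ 2 := by
    have := sq_sum_le_card_mul_sum_sq (s := Y) (f := fun y => (#(N y) : ℝ))
    rw [s1, hY] at this
    have h2 : (n : ℝ) * (δ ^ 2 * n ^ 3) ≤ n * ∑ y ∈ Y, (#(N y) : ℝ) ^ 2 := by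
      refine le_trans (le_of_eq (by ring)) this
    exact le_of_mul_le_mul_left h2 hn0
  have s3 : ∑ y ∈ Y, (#(B y) : ℝ) ≤ δ ^ 2 / 16 * n ^ 3 := by
    have e : ∑ y ∈ Y, #(B y) = ∑ q ∈ (X ×ˢ X).filter (fun q => bad q.1 q.2), #(Cod q.1 q.2) := by
      have := sum_card_bipartiteAbove_eq_sum_card_bipartiteBelow (s := Y)
        (t := (X ×ˢ X).filter (fun q => bad q.1 q.2))
        (fun y q => (q.1, y) ∈ G ∧ (q.2, y) ∈ G)
      convert this using 2
      · congr 1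
        ext q
        simp only [B, N, bipartiteAbove, mem_filter, mem_product]
        tauto
      · rfl
    have e' : ∑ y ∈ Y, (#(B y) : ℝ)
        = ∑ q ∈ (X ×ˢ X).filter (fun q => bad q.1 q.2), (#(Cod q.1 q.2) : ℝ) := by
      exact_mod_cast e
    rw [e']
    calc _ ≤ #((X ×ˢ X).filter (fun q => bad q.1 q.2)) • (δ ^ 2 / 16 * n) :=
          sum_le_card_nsmul _ _ _ (fun q hq => (mem_filter.1 hq).2.le)
      _ ≤ (n ^ 2 : ℝ) * (δ ^ 2 / 16 * n) := by
          rw [nsmul_eq_mul]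
          have h1 : #((X ×ˢ X).filter (fun q => bad q.1 q.2)) ≤ n ^ 2 := by
            refine (card_filter_le _ _).trans ?_
            rw [card_product, hX, sq]
          have h2 : (#((X ×ˢ X).filter (fun q => bad q.1 q.2)) : ℝ) ≤ n ^ 2 := by
            exact_mod_cast h1
          gcongr
      _ = _ := by ring
  obtain ⟨y, hy, hyy⟩ : ∃ y ∈ Y, δ ^ 2 * n ^ 2 / 2 + 8 * (#(B y) : ℝ) ≤ (#(N y) : ℝ) ^ 2 := by
    apply exists_le_of_sum_le
    · rw [← card_pos]; omega
    · rw [sum_add_distrib, sum_const, hY, nsmul_eq_mul, ← mul_sum]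
      nlinarith
  set m : ℝ := (#(N y) : ℝ) with hm
  have hm0 : 0 ≤ m := by positivity
  have hB0 : (0 : ℝ) ≤ #(B y) := by positivity
  have hm1 : δ * n / 2 ≤ m := by
    apply le_of_sq_le_sq _ hm0
    have : 0 ≤ δ ^ 2 * n ^ 2 := by positivity
    nlinarith
  have hmpos : 0 < m := lt_of_lt_of_le (by positivity) hm1
  let bn : ℤ → Finset ℤ := fun a => (N y).filter (fun a' => bad a a')
  let A := (N y).filter (fun a => 4 * (#(bn a) : ℝ) ≤ m)
  let R := (N y).filter (fun a => ¬ 4 * (#(bn a) : ℝ) ≤ m)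
  have hAR : (#A : ℝ) + #R = m := by
    have h : #A + #R = #(N y) :=
      card_filter_add_card_filter_not (s := N y) (fun a => 4 * (#(bn a) : ℝ) ≤ m)
    rw [hm, ← h, Nat.cast_add]
  have hBs : (#(B y) : ℝ) = ∑ a ∈ N y, (#(bn a) : ℝ) := by
    have : #(B y) = ∑ a ∈ N y, #(bn a) := by
      simp only [B, bn]
      rw [card_filter, sum_product]
      refine sum_congr rfl fun a _ => ?_
      rw [card_filter]
    rw [this, Nat.cast_sum]
  have hR : (#R : ℝ) * m ≤ 4 * #(B y) := by
    have h1 : #R • m ≤ ∑ a ∈ R, 4 * (#(bn a) : ℝ) :=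
      card_nsmul_le_sum _ _ _ (fun a ha => (not_le.1 (mem_filter.1 ha).2).le)
    rw [nsmul_eq_mul] at h1
    refine h1.trans ?_
    rw [hBs, mul_sum]
    exact sum_le_sum_of_subset_of_nonneg (filter_subset _ _) (fun i _ _ => mul_nonneg zero_le_four (Nat.cast_nonneg _))
  have hR2 : (#R : ℝ) ≤ m / 2 := by
    have : 0 ≤ δ ^ 2 * n ^ 2 := by positivity
    have h3 : (#R : ℝ) * m ≤ (m / 2) * m := by
      have e : (m / 2) * m = m ^ 2 / 2 := by ring
      rw [e]
      linarith
    exact le_of_mul_le_mul_right h3 hmpos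
  refine ⟨y, A, ?_, ?_, ?_⟩
  · intro a ha
    exact (mem_filter.1 (mem_filter.1 ha).1).2
  · linarith
  let f : ℤ × ℤ × ℤ × ℤ → ℤ := fun z => z.1 - z.2.1 + z.2.2.1 - z.2.2.2
  let T := Z ×ˢ Z ×ˢ Z ×ˢ Z
  set K : ℝ := m / 2 * (δ ^ 2 / 16 * n) ^ 2 with hK
  have hfib : ∀ w ∈ A - A, K ≤ (#(T.filter (fun z => f z = w)) : ℝ) := by
    intro w hw
    obtain ⟨a, ha, a', ha', rfl⟩ := mem_sub.1 hw
    let Gd := (N y).filter (fun c => ¬ bad a c ∧ ¬ bad a' c)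
    have hGd : m / 2 ≤ (#Gd : ℝ) := by
      have h1 : N y ⊆ Gd ∪ (bn a ∪ bn a') := by
        intro c hc
        simp only [Gd, bn, mem_union, mem_filter, hc, true_and]
        tauto
      have h2 : #(N y) ≤ #Gd + (#(bn a) + #(bn a')) :=
        (card_le_card h1).trans ((card_union_le _ _).trans
          (Nat.add_le_add_left (card_union_le _ _) _))
      have h3 : m ≤ (#Gd : ℝ) + (#(bn a) + #(bn a')) := by rw [hm]; exact_mod_cast h2
      have h4 := (mem_filter.1 ha).2
      have h5 := (mem_filter.1 ha').2
      linarith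
    let Sg : Finset (Σ _ : ℤ, ℤ × ℤ) := Gd.sigma (fun c => Cod a c ×ˢ Cod a' c)
    have hSg : K ≤ (#Sg : ℝ) := by
      simp only [Sg, card_sigma, card_product]
      push_cast
      have h1 : #Gd • ((δ ^ 2 / 16 * n) ^ 2) ≤ ∑ c ∈ Gd, (#(Cod a c) : ℝ) * #(Cod a' c) := by
        apply card_nsmul_le_sum
        intro c hc
        obtain ⟨-, hc1, hc2⟩ := mem_filter.1 hc
        have hc1 := not_lt.1 hc1
        have hc2 := not_lt.1 hc2
        rw [sq]
        gcongr
      refine le_trans ?_ h1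
      rw [nsmul_eq_mul, hK]
      gcongr
    refine hSg.trans ?_
    norm_cast
    refine card_le_card_of_injOn
      (fun s => (a + s.2.1, s.1 + s.2.1, s.1 + s.2.2, a' + s.2.2)) ?_ ?_
    · rintro ⟨c, b, b'⟩ h
      simp only [Sg, coe_sigma, Set.mem_sigma_iff, mem_coe, mem_sigma, mem_product, Cod, mem_filter] at h
      obtain ⟨-, ⟨-, h1, h2⟩, -, h3, h4⟩ := h
      simp only [T, f, mem_coe, mem_filter, mem_product]
      refine ⟨⟨hGZ _ h1, hGZ _ h2, hGZ _ h4, hGZ _ h3⟩, by ring⟩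
    · rintro ⟨c, b, b'⟩ - ⟨d, e, e'⟩ - h
      simp only [Prod.mk.injEq] at h
      obtain ⟨h1, h2, h3, h4⟩ := h
      obtain rfl : b = e := by omega
      obtain rfl : b' = e' := by omega
      obtain rfl : c = d := by omega
      rfl
  have hT : (#T : ℝ) = n ^ 4 := by
    simp only [T, card_product, hZ]
    push_cast
    ring
  have hle : (#(A - A) : ℝ) * K ≤ n ^ 4 := by
    have h1 : #(A - A) • K ≤ ∑ w ∈ A - A, (#(T.filter (fun z => f z = w)) : ℝ) :=
      card_nsmul_le_sum _ _ _ hfib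
    rw [nsmul_eq_mul] at h1
    refine h1.trans ?_
    rw [← hT]
    have h2 : ∑ w ∈ A - A, #(T.filter (fun z => f z = w)) ≤ #T := by
      rw [← card_biUnion]
      · apply card_le_card
        intro z hz
        simp only [mem_biUnion, mem_filter] at hz
        obtain ⟨_, _, h, _⟩ := hz
        exact h
      · intro u _ v _ huv
        rw [Function.onFun, disjoint_left]
        intro z hz hz'
        exact huv ((mem_filter.1 hz).2.symm.trans (mem_filter.1 hz').2)
    exact_mod_cast h2
  have hK2 : δ ^ 5 * n ^ 3 / 1024 ≤ K := by
    rw [hK]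
    calc δ ^ 5 * (n : ℝ) ^ 3 / 1024 = (δ * n / 2) / 2 * (δ ^ 2 / 16 * n) ^ 2 := by ring
      _ ≤ _ := by gcongr
  have h9 : (#(A - A) : ℝ) * (δ ^ 5 * n ^ 3 / 1024) ≤ n ^ 4 :=
    (mul_le_mul_of_nonneg_left hK2 (by positivity)).trans hle
  have h10 : (δ ^ 5 * #(A - A)) * (n : ℝ) ^ 3 ≤ (1024 * n) * n ^ 3 := by nlinarith
  exact le_of_mul_le_mul_right h10 (by positivity)

lemma main_bound (n : ℕ) (hn : 1 ≤ n) (X Y Z W : Finset ℤ) (hX : #X = n) (hY : #Y = n)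
    (hZ : #Z = n) (hW : ThreeAPFree (W : Set ℤ)) (δ : ℝ) (hδ : 0 < δ)
    (hc : (#((X ×ˢ Y).filter (fun p => p.1 + p.2 ∈ Z ∧ p.1 - p.2 ∈ W)) : ℝ) = δ * n ^ 2) :
    δ ^ 25 ≤ 2 ^ 54 * ((r3 n : ℝ) / n) := by
  have hn0 : (0 : ℝ) < n := by exact_mod_cast hn
  have hδ1 : δ ≤ 1 := by
    have h1 : #((X ×ˢ Y).filter (fun p => p.1 + p.2 ∈ Z ∧ p.1 - p.2 ∈ W)) ≤ n ^ 2 := by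
      refine (card_filter_le _ _).trans ?_
      rw [card_product, hX, hY, sq]
    have h2 : δ * n ^ 2 ≤ 1 * (n : ℝ) ^ 2 := by
      rw [← hc, one_mul]; exact_mod_cast h1
    exact le_of_mul_le_mul_right h2 (by positivity)
  obtain ⟨y, A, hAG, hA1, hA2⟩ := bsg n hn X Y Z hX hY hZ _ (filter_subset _ _)
    (fun q hq => (mem_filter.1 hq).2.1) δ hδ hc
  have hAfree : ThreeAPFree (A : Set ℤ) := by
    intro a ha b hb c hc h
    have ha := (mem_filter.1 (hAG a ha)).2.2
    have hb := (mem_filter.1 (hAG b hb)).2.2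
    have hc := (mem_filter.1 (hAG c hc)).2.2
    have := hW (mem_coe.2 ha) (mem_coe.2 hb) (mem_coe.2 hc) (by simp only; linarith)
    simpa using this
  have hAp : (0 : ℝ) < #A := lt_of_lt_of_le (by positivity) hA1
  have hAne : A.Nonempty := by
    rw [← card_pos]; exact_mod_cast hAp
  set M := #((A + A) - (A + A)) with hM
  have hPR : (M : ℝ) ≤ ((#(A - A) : ℝ) / #A) ^ 4 * #A := by
    have := pluennecke_ruzsa_inequality_nsmul_sub_nsmul_sub hAne A 2 2
    rw [two_nsmul] at this
    have h2 : (((M : ℚ≥0) : ℝ)) ≤ (((#(A - A) / #A : ℚ≥0) ^ (2 + 2) * #A : ℚ≥0) : ℝ) := by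
      exact NNRat.cast_le.2 this
    push_cast at h2
    exact h2
  have hK : (#(A - A) : ℝ) / #A ≤ 4096 / δ ^ 6 := by
    rw [div_le_div_iff₀ hAp (by positivity)]
    have : δ * (δ ^ 5 * #(A - A)) ≤ δ * (1024 * n) := by gcongr
    nlinarith
  have hA3 : (#A : ℝ) ≤ n := by
    have : A ⊆ X := fun a ha => (mem_product.1 (mem_filter.1 (hAG a ha)).1).1
    have := card_le_card this
    rw [hX] at this
    exact_mod_cast this
  have hM2 : (M : ℝ) ≤ 2 ^ 48 / δ ^ 24 * n := by
    calc (M : ℝ) ≤ ((#(A - A) : ℝ) / #A) ^ 4 * #A := hPR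
      _ ≤ (4096 / δ ^ 6) ^ 4 * n := by gcongr
      _ = _ := by rw [div_pow, ← pow_mul]; norm_num
  have hroth : #A ≤ (8 * M / n + 1) * r3 n := by
    refine (model A hAfree).trans ?_
    have h1 : 8 * M ≤ (8 * M / n + 1) * n := (Nat.lt_div_mul_add (a := 8 * M) (b := n) (by omega)).le.trans
      (le_of_eq (by ring))
    refine (rothNumberNat.mono h1).trans ((roth_mul_le _ _).trans ?_)
    exact Nat.mul_le_mul_left _ (roth_le_r3 n)
  have hroth' : (#A : ℝ) ≤ ((8 * M / n : ℝ) + 1) * r3 n := by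
    have h1 : (#A : ℝ) ≤ (((8 * M / n : ℕ) : ℝ) + 1) * r3 n := by exact_mod_cast hroth
    refine h1.trans ?_
    have h2 : ((8 * M / n : ℕ) : ℝ) ≤ (8 * M / n : ℝ) := by
      have := @Nat.cast_div_le ℝ _ _ _ (8 * M) n
      push_cast at this
      exact this
    gcongr
  have h3 : (8 * M / n : ℝ) + 1 ≤ 2 ^ 52 / δ ^ 24 := by
    have h4 : (8 * M / n : ℝ) ≤ 2 ^ 51 / δ ^ 24 := by
      rw [div_le_iff₀ hn0]
      calc (8 * M : ℝ) ≤ 8 * (2 ^ 48 / δ ^ 24 * n) := by gcongr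
        _ = _ := by ring
    have h5 : (1 : ℝ) ≤ 2 ^ 51 / δ ^ 24 := by
      rw [le_div_iff₀ (by positivity)]
      have : δ ^ 24 ≤ 1 := pow_le_one₀ hδ.le hδ1
      linarith
    calc (8 * M / n : ℝ) + 1 ≤ 2 ^ 51 / δ ^ 24 + 2 ^ 51 / δ ^ 24 := add_le_add h4 h5
      _ = _ := by ring
  have h6 : δ * n / 4 ≤ 2 ^ 52 / δ ^ 24 * r3 n :=
    hA1.trans (hroth'.trans (by gcongr))
  have h7 : δ * n / 4 * δ ^ 24 ≤ 2 ^ 52 * r3 n := by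
    calc δ * n / 4 * δ ^ 24 ≤ (2 ^ 52 / δ ^ 24 * r3 n) * δ ^ 24 := by gcongr
      _ = _ := by field_simp
  rw [← mul_div_assoc, le_div_iff₀ hn0]
  nlinarith

theorem stmt_16 :
    ∃ C c : ℝ, 0 < C ∧ 0 < c ∧
      ∀ n : ℕ, 1 ≤ n → ∀ X Y Z W : Finset ℤ,
        X.card = n → Y.card = n → Z.card = n → ThreeAPFree (W : Set ℤ) →
        (((X ×ˢ Y).filter (fun p => p.1 + p.2 ∈ Z ∧ p.1 - p.2 ∈ W)).card : ℝ)
          ≤ C * ((r3 n : ℝ) / n) ^ c * n ^ 2 := by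
  refine ⟨((2 : ℝ) ^ 54) ^ ((1 : ℝ) / 25), 1 / 25, by positivity, by norm_num, ?_⟩
  intro n hn X Y Z W hX hY hZ hW
  have hn0 : (0 : ℝ) < n := by exact_mod_cast hn
  set g : ℝ := (#((X ×ˢ Y).filter (fun p => p.1 + p.2 ∈ Z ∧ p.1 - p.2 ∈ W)) : ℝ) with hg
  have hg0 : 0 ≤ g := by positivity
  obtain h0 | hpos := hg0.eq_or_lt
  · rw [← h0]; positivity
  have hmain := main_bound n hn X Y Z W hX hY hZ hW (g / n ^ 2) (by positivity)
    (by rw [← hg]; field_simp)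
  rw [← Real.mul_rpow (by positivity) (by positivity), ← div_le_iff₀ (by positivity)]
  calc g / n ^ 2 = ((g / n ^ 2) ^ 25) ^ ((1 : ℝ) / 25) := by
        rw [← Real.rpow_natCast (g / n ^ 2) 25, ← Real.rpow_mul (by positivity)]
        norm_num
    _ ≤ _ := by gcongr
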